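/- The set function f is submodular on sets of cardinality at most k: for all subsets A, B of {1,…,m} with |A ∪ B| ≤ k, f(A ∪ B) + f(A ∩ B) ≤ f(A) + f(B). -/

import Mathlib

open Finset

noncomputable section

/-- Frobenius inner product `⟨S, γ⟩ = Σ_{i,j} S_{ij} γ_{ij}`. -/
def dotS {m n : ℕ} (S γ : Fin m → Fin n → ℝ) : ℝ := ∑ i, ∑ j, S i j * γ i j

/-- Transport polytope with equality marginals. -/
def Gamma {m n : ℕ} (μ : Fin m → ℝ) (ν : Fin n → ℝ) : Set (Fin m → Fin n → ℝ) :=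
  {γ | (∀ i j, 0 ≤ γ i j) ∧ (∀ i, ∑ j, γ i j = μ i) ∧ (∀ j, ∑ i, γ i j = ν j)}

/-- Semi-relaxed transport polytope: target marginal constraint is `≤`. -/
def GammaLe {m n : ℕ} (μ : Fin m → ℝ) (ν : Fin n → ℝ) : Set (Fin m → Fin n → ℝ) :=
  {γ | (∀ i j, 0 ≤ γ i j) ∧ (∀ i, ∑ j, γ i j = μ i) ∧ (∀ j, ∑ i, γ i j ≤ ν j)}

/-- Indicator vector of a subset `P ⊆ {1,…,m}`. -/
def indVec {m : ℕ} (P : Finset (Fin m)) : Fin m → ℝ := fun i => if i ∈ P then 1 else 0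

/-- `h(P) = max_{γ ∈ Γ(1_P, (|P|/n)𝟙)} ⟨S, γ⟩`. -/
def hval {m n : ℕ} (S : Fin m → Fin n → ℝ) (P : Finset (Fin m)) : ℝ :=
  sSup (dotS S '' Gamma (indVec P) (fun _ => (P.card : ℝ) / (n : ℝ)))

/-- `f(P) = max_{γ ∈ Γ_≤(1_P, (k/n)𝟙)} ⟨S, γ⟩`. -/
def fval {m n : ℕ} (k : ℕ) (S : Fin m → Fin n → ℝ) (P : Finset (Fin m)) : ℝ :=
  sSup (dotS S '' GammaLe (indVec P) (fun _ => (k : ℝ) / (n : ℝ)))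

/-! The transport value is dual to a linear programme over prices `(u, v)` with `0 ≤ v` and
`S i j ≤ u i + v j`. Feasible prices are closed under the two mixed lattice operations
`(u ⊓ u', v ⊔ v')` and `(u ⊔ u', v ⊓ v')`. When near-optimal prices for row marginals `μ` and `μ'`
are recombined this way into prices for `μ ⊔ μ'` and `μ ⊓ μ'`, the dual objective
`μ ⬝ᵥ u + ν ⬝ᵥ v` can only decrease in total: its `v`-part is modular and its `u`-part obeys the
rearrangement inequality. Hence the value is submodular in the row marginal, and indicator vectors
turn unions and intersections into `⊔` and `⊓`. -/

section LagrangeMultiplier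

variable {E F : Type*} [AddCommGroup E] [Module ℝ E] [TopologicalSpace E]
  [AddCommGroup F] [Module ℝ F] [TopologicalSpace F] [IsTopologicalAddGroup F]
  [ContinuousSMul ℝ F] [LocallyConvexSpace ℝ F]
  [PartialOrder F] [IsOrderedAddMonoid F] [PosSMulMono ℝ F] [OrderClosedTopology F]

theorem exists_lagrange_multiplier {K : Set E} (hconv : Convex ℝ K) (hcomp : IsCompact K)
    (f : E →ᴬ[ℝ] ℝ) (g : E →ᴬ[ℝ] F) {t : ℝ} (hfeas : ∃ x ∈ K, 0 ≤ g x)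
    (hlt : ∀ x ∈ K, 0 ≤ g x → f x < t) :
    ∃ Λ : StrongDual ℝ F, (∀ y, 0 ≤ y → 0 ≤ Λ y) ∧ ∀ x ∈ K, f x + Λ (g x) < t := by
  let h : E →ᴬ[ℝ] ℝ × F := (f - .const ℝ E t).prod g
  have hdisj : Disjoint (h '' K) (ProperCone.positive ℝ (ℝ × F)) := by
    rw [Set.disjoint_left]
    rintro _ ⟨x, hx, rfl⟩ ⟨hfx, hgx⟩
    exact (hlt x hx hgx).not_ge (sub_nonneg.mp hfx)
  obtain ⟨φ, hφ_nonneg, hφ_neg⟩ := ProperCone.hyperplane_separation _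
    (hconv.affine_image h.toAffineMap) (hcomp.image h.continuous) hdisj
  have hφ (a : ℝ) (y : F) : φ (a, y) = a * φ (1, 0) + φ (0, y) := by
    rw [← smul_eq_mul, ← map_smul, ← map_add]
    simp
  have hneg : ∀ x ∈ K, (f x - t) * φ (1, 0) + φ (0, g x) < 0 := fun x hx ↦
    (hφ _ _).symm.trans_lt (hφ_neg _ ⟨x, hx, rfl⟩)
  have hφ_snd (y : F) (hy : 0 ≤ y) : 0 ≤ φ (0, y) := hφ_nonneg _ ⟨le_rfl, hy⟩
  have hφ_fst : 0 < φ (1, 0) := by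
    obtain ⟨x, hx, hgx⟩ := hfeas
    have hfst : 0 ≤ φ (1, 0) := hφ_nonneg _ ⟨zero_le_one, le_rfl⟩
    refine hfst.lt_of_ne fun h0 ↦ (hneg x hx).not_ge ?_
    simpa [← h0] using hφ_snd _ hgx
  refine ⟨(φ (1, 0))⁻¹ • φ.comp (.inr ℝ ℝ F), fun y hy ↦ ?_, fun x hx ↦ ?_⟩
  · exact mul_nonneg (inv_nonneg.mpr hφ_fst.le) (hφ_snd y hy)
  · have hdiv : f x - t + (φ (1, 0))⁻¹ * φ (0, g x) < 0 := by
      refine neg_of_mul_neg_left ?_ hφ_fst.le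
      simpa [add_mul, hφ_fst.ne', mul_right_comm] using hneg x hx
    simpa [sub_add_eq_add_sub, sub_neg] using hdiv

end LagrangeMultiplier

section Prices

open scoped Matrix

/-- Feasibility for the linear programme dual to semi-relaxed transport with score `S`: row prices
`u` and nonnegative column prices `v` that jointly dominate every score. -/
def IsDualFeasible {α β : Type*} (S : α → β → ℝ) (u : α → ℝ) (v : β → ℝ) : Prop :=
  0 ≤ v ∧ ∀ i j, S i j ≤ u i + v j

variable {α β : Type*} {S : α → β → ℝ} {u u' : α → ℝ} {v v' : β → ℝ}

theorem IsDualFeasible.inf_sup (h : IsDualFeasible S u v) (h' : IsDualFeasible S u' v') :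
    IsDualFeasible S (u ⊓ u') (v ⊔ v') := by
  refine ⟨h.1.trans le_sup_left, fun i j ↦ ?_⟩
  rw [Pi.inf_apply, inf_add]
  exact le_inf ((h.2 i j).trans (by gcongr; exact le_sup_left))
    ((h'.2 i j).trans (by gcongr; exact le_sup_right))

theorem IsDualFeasible.sup_inf (h : IsDualFeasible S u v) (h' : IsDualFeasible S u' v') :
    IsDualFeasible S (u ⊔ u') (v ⊓ v') := by
  refine ⟨le_inf h.1 h'.1, fun i j ↦ ?_⟩
  rw [Pi.inf_apply, add_inf]
  exact le_inf ((h.2 i j).trans (by gcongr; exact le_sup_left))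
    ((h'.2 i j).trans (by gcongr; exact le_sup_right))

theorem sup_mul_inf_add_inf_mul_sup_le {R : Type*} [CommRing R] [LinearOrder R]
    [IsStrictOrderedRing R] (a b x y : R) :
    (a ⊔ b) * (x ⊓ y) + (a ⊓ b) * (x ⊔ y) ≤ a * x + b * y := by
  rcases le_total a b with hab | hab <;> rcases le_total x y with hxy | hxy <;>
    simp only [hab, hxy, sup_of_le_left, sup_of_le_right, inf_of_le_left, inf_of_le_right] <;>
    nlinarith [mul_nonneg (sub_nonneg.mpr hab) (sub_nonneg.mpr hxy)]

theorem sup_dotProduct_inf_add_inf_dotProduct_sup_le {ι R : Type*} [Fintype ι] [CommRing R]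
    [LinearOrder R] [IsStrictOrderedRing R] (a b x y : ι → R) :
    (a ⊔ b) ⬝ᵥ (x ⊓ y) + (a ⊓ b) ⬝ᵥ (x ⊔ y) ≤ a ⬝ᵥ x + b ⬝ᵥ y := by
  simp only [dotProduct, ← sum_add_distrib]
  exact sum_le_sum fun i _ ↦ sup_mul_inf_add_inf_mul_sup_le (a i) (b i) (x i) (y i)

end Prices

section RowPlans

open scoped Matrix

/-- Transport plans with prescribed row marginal and unconstrained column marginal: the domain of
the Lagrangian that relaxes the column capacities. -/
def rowPlans {α β : Type*} [Fintype β] (μ : α → ℝ) : Set (α → β → ℝ) :=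
  {γ | 0 ≤ γ ∧ ∀ i, ∑ j, γ i j = μ i}

variable {α β : Type*} [Fintype β]

theorem convex_rowPlans (μ : α → ℝ) : Convex ℝ (rowPlans (β := β) μ) := by
  rintro γ ⟨hγ, hγμ⟩ δ ⟨hδ, hδμ⟩ a b ha hb hab
  refine ⟨add_nonneg (smul_nonneg ha hγ) (smul_nonneg hb hδ), fun i ↦ ?_⟩
  simp only [Pi.add_apply, Pi.smul_apply, smul_eq_mul, sum_add_distrib, ← mul_sum, hγμ, hδμ]
  rw [← add_mul, hab, one_mul]

theorem isCompact_rowPlans (μ : α → ℝ) : IsCompact (rowPlans (β := β) μ) := by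
  have hclosed : IsClosed (rowPlans (β := β) μ) := by
    simp only [rowPlans, Set.ofPred_and, Set.ofPred_forall]
    exact isClosed_Ici.inter (isClosed_iInter fun i ↦ isClosed_eq (by fun_prop) continuous_const)
  refine (isCompact_Icc (a := 0) (b := fun i _ ↦ μ i)).of_isClosed_subset hclosed ?_
  rintro γ ⟨hγ, hγμ⟩
  exact ⟨hγ, fun i j ↦ (single_le_sum (fun j _ ↦ hγ i j) (mem_univ j)).trans_eq (hγμ i)⟩

theorem sum_sum_add_mul_of_mem_rowPlans [Fintype α] {μ : α → ℝ} {γ : α → β → ℝ}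
    (hγ : γ ∈ rowPlans μ) (u : α → ℝ) (v : β → ℝ) :
    ∑ i, ∑ j, (u i + v j) * γ i j = μ ⬝ᵥ u + (∑ i, γ i) ⬝ᵥ v := by
  simp only [add_mul, sum_add_distrib, ← mul_sum, hγ.2, sum_dotProduct]
  simp only [dotProduct, mul_comm]

end RowPlans

section TransportValue

open scoped Matrix

variable {m n : ℕ} {S : Fin m → Fin n → ℝ} {μ : Fin m → ℝ} {ν : Fin n → ℝ}

/-- The optimal score of a semi-relaxed transport plan, with arbitrary row marginal `μ` and column
capacities `ν`. -/
def transportValue (S : Fin m → Fin n → ℝ) (μ : Fin m → ℝ) (ν : Fin n → ℝ) : ℝ :=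
  sSup (dotS S '' GammaLe μ ν)

/-- `dotS S` as a continuous linear functional. -/
def dotSL (S : Fin m → Fin n → ℝ) : (Fin m → Fin n → ℝ) →L[ℝ] ℝ :=
  ∑ i, ∑ j, S i j • (ContinuousLinearMap.proj (φ := fun _ : Fin n ↦ ℝ) j).comp (.proj i)

theorem dotSL_apply (S γ : Fin m → Fin n → ℝ) : dotSL S γ = dotS S γ := by
  simp [dotSL, dotS]

theorem mem_GammaLe_iff {γ : Fin m → Fin n → ℝ} :
    γ ∈ GammaLe μ ν ↔ γ ∈ rowPlans μ ∧ ∑ i, γ i ≤ ν := by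
  simp [GammaLe, rowPlans, Pi.le_def, and_assoc]

theorem GammaLe_nonempty (hμ : 0 ≤ μ) (hν : 0 ≤ ν) (hμν : ∑ i, μ i ≤ ∑ j, ν j) :
    (GammaLe μ ν).Nonempty := by
  have hν_sum : 0 ≤ ∑ j, ν j := sum_nonneg fun j _ ↦ hν j
  -- If `ν` has total mass `0` then so has `μ`, and `x / 0 = 0` makes this the zero plan.
  refine ⟨fun i j ↦ μ i * ν j / ∑ j, ν j, fun i j ↦ ?_, fun i ↦ ?_, fun j ↦ ?_⟩
  · exact div_nonneg (mul_nonneg (hμ i) (hν j)) hν_sum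
  · rw [← sum_div, ← mul_sum]
    refine mul_div_cancel_of_imp fun hν0 ↦ ?_
    exact ((single_le_sum (fun i _ ↦ hμ i) (mem_univ i)).trans (hμν.trans_eq hν0)).antisymm (hμ i)
  · rw [← sum_div, ← sum_mul]
    exact div_le_of_le_mul₀ hν_sum (hν j) (by rw [mul_comm]; gcongr; exact hν j)

theorem bddAbove_dotS_GammaLe (S : Fin m → Fin n → ℝ) (μ : Fin m → ℝ) (ν : Fin n → ℝ) :
    BddAbove (dotS S '' GammaLe μ ν) := by
  have hbdd := ((isCompact_rowPlans μ).image (dotSL S).continuous).bddAbove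
  simp only [dotSL_apply] at hbdd
  exact hbdd.mono (Set.image_mono fun γ hγ ↦ (mem_GammaLe_iff.mp hγ).1)

theorem dotS_le_of_isDualFeasible {γ : Fin m → Fin n → ℝ} {u : Fin m → ℝ} {v : Fin n → ℝ}
    (hγ : γ ∈ GammaLe μ ν) (huv : IsDualFeasible S u v) : dotS S γ ≤ μ ⬝ᵥ u + ν ⬝ᵥ v := by
  obtain ⟨hrow, hcol⟩ := mem_GammaLe_iff.mp hγ
  calc dotS S γ ≤ ∑ i, ∑ j, (u i + v j) * γ i j := by
        unfold dotS
        gcongr with i _ j _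
        · exact hrow.1 i j
        · exact huv.2 i j
    _ = μ ⬝ᵥ u + (∑ i, γ i) ⬝ᵥ v := sum_sum_add_mul_of_mem_rowPlans hrow u v
    _ ≤ μ ⬝ᵥ u + ν ⬝ᵥ v := by
        gcongr
        exact dotProduct_le_dotProduct_of_nonneg_right hcol huv.1

theorem transportValue_le_of_isDualFeasible {u : Fin m → ℝ} {v : Fin n → ℝ}
    (hne : (GammaLe μ ν).Nonempty) (huv : IsDualFeasible S u v) :
    transportValue S μ ν ≤ μ ⬝ᵥ u + ν ⬝ᵥ v :=
  csSup_le (hne.image _) (Set.forall_mem_image.mpr fun _ hγ ↦ dotS_le_of_isDualFeasible hγ huv)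

theorem exists_column_prices (hne : (GammaLe μ ν).Nonempty) {t : ℝ}
    (ht : transportValue S μ ν < t) :
    ∃ v : Fin n → ℝ, 0 ≤ v ∧ ∀ γ ∈ rowPlans μ, dotS S γ + (ν - ∑ i, γ i) ⬝ᵥ v < t := by
  let slack : (Fin m → Fin n → ℝ) →ᴬ[ℝ] Fin n → ℝ :=
    .const ℝ _ ν - (∑ i, ContinuousLinearMap.proj i :
      (Fin m → Fin n → ℝ) →L[ℝ] Fin n → ℝ).toContinuousAffineMap
  have hslack (γ : Fin m → Fin n → ℝ) : slack γ = ν - ∑ i, γ i := by simp [slack]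
  have hGamma (γ : Fin m → Fin n → ℝ) : γ ∈ GammaLe μ ν ↔ γ ∈ rowPlans μ ∧ 0 ≤ slack γ := by
    rw [mem_GammaLe_iff, hslack, sub_nonneg]
  have hfeas : ∃ γ ∈ rowPlans μ, 0 ≤ slack γ := hne.imp fun γ ↦ (hGamma γ).mp
  have hlt : ∀ γ ∈ rowPlans μ, 0 ≤ slack γ → dotSL S γ < t := fun γ hγ hcol ↦
    (le_csSup (bddAbove_dotS_GammaLe S μ ν)
      ⟨γ, (hGamma γ).mpr ⟨hγ, hcol⟩, (dotSL_apply S γ).symm⟩).trans_lt ht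
  obtain ⟨Λ, hΛ, hΛlt⟩ := exists_lagrange_multiplier (convex_rowPlans μ) (isCompact_rowPlans μ)
    (dotSL S).toContinuousAffineMap slack hfeas hlt
  have hΛ_eq (w : Fin n → ℝ) : Λ w = w ⬝ᵥ fun j ↦ Λ (Pi.single j 1) := by
    conv_lhs => rw [pi_eq_sum_univ' w, map_sum]
    simp [dotProduct]
  refine ⟨_, fun j ↦ hΛ (Pi.single j 1) (Pi.single_nonneg.mpr zero_le_one), fun γ hγ ↦ ?_⟩
  rw [← hslack, ← hΛ_eq, ← dotSL_apply]
  exact hΛlt γ hγ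

theorem exists_isDualFeasible_lt [NeZero n] (hne : (GammaLe μ ν).Nonempty) {t : ℝ}
    (ht : transportValue S μ ν < t) :
    ∃ u v, IsDualFeasible S u v ∧ μ ⬝ᵥ u + ν ⬝ᵥ v < t := by
  obtain ⟨v, hv, hlt⟩ := exists_column_prices hne ht
  have hμ : 0 ≤ μ := by
    obtain ⟨δ, hδ, hδμ, -⟩ := hne
    exact fun i ↦ hδμ i ▸ sum_nonneg fun j _ ↦ hδ i j
  -- Each row ships all its mass to a column of largest reduced score `S i j - v j`.
  choose J hJ using fun i ↦ Finite.exists_max fun j ↦ S i j - v j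
  let γ : Fin m → Fin n → ℝ := fun i ↦ Pi.single (J i) (μ i)
  have hγ : γ ∈ rowPlans μ :=
    ⟨fun i ↦ Pi.single_nonneg (α := fun _ ↦ ℝ) |>.mpr (hμ i),
      fun i ↦ Fintype.sum_pi_single' (J i) (μ i)⟩
  refine ⟨fun i ↦ S i (J i) - v (J i), v, ⟨hv, fun i j ↦ sub_le_iff_le_add.mp (hJ i j)⟩, ?_⟩
  have hdot : dotS S γ = μ ⬝ᵥ fun i ↦ S i (J i) :=
    sum_congr rfl fun i _ ↦ (dotProduct_single (S i) (μ i) (J i)).trans (mul_comm _ _)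
  have hcol : (∑ i, γ i) ⬝ᵥ v = μ ⬝ᵥ fun i ↦ v (J i) := by
    simp only [γ, sum_dotProduct, single_dotProduct]
    rfl
  calc μ ⬝ᵥ (fun i ↦ S i (J i) - v (J i)) + ν ⬝ᵥ v
      = dotS S γ + (ν - ∑ i, γ i) ⬝ᵥ v := by
        rw [hdot, sub_dotProduct, hcol, ← Pi.sub_def, dotProduct_sub]
        ring
    _ < t := hlt γ hγ

theorem stmt_8_general {m n : ℕ} [NeZero n] (S : Fin m → Fin n → ℝ) {μ μ' : Fin m → ℝ}
    {ν : Fin n → ℝ} (hμ : 0 ≤ μ) (hμ' : 0 ≤ μ') (hν : 0 ≤ ν)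
    (hmass : ∑ i, (μ ⊔ μ') i ≤ ∑ j, ν j) :
    transportValue S (μ ⊔ μ') ν + transportValue S (μ ⊓ μ') ν ≤
      transportValue S μ ν + transportValue S μ' ν := by
  have hne {ρ : Fin m → ℝ} (hρ : 0 ≤ ρ) (hle : ρ ≤ μ ⊔ μ') : (GammaLe ρ ν).Nonempty :=
    GammaLe_nonempty hρ hν ((sum_le_sum fun i _ ↦ hle i).trans hmass)
  refine le_add_of_forall_lt fun t ht t' ht' ↦ ?_
  obtain ⟨u, v, huv, hlt⟩ := exists_isDualFeasible_lt (hne hμ le_sup_left) ht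
  obtain ⟨u', v', huv', hlt'⟩ := exists_isDualFeasible_lt (hne hμ' le_sup_right) ht'
  have hsup := transportValue_le_of_isDualFeasible (hne (hμ.trans le_sup_left) le_rfl)
    (huv.inf_sup huv')
  have hinf := transportValue_le_of_isDualFeasible (hne (le_inf hμ hμ') inf_le_sup)
    (huv.sup_inf huv')
  have hrow := sup_dotProduct_inf_add_inf_dotProduct_sup_le μ μ' u u'
  have hcol : ν ⬝ᵥ (v ⊓ v') + ν ⬝ᵥ (v ⊔ v') = ν ⬝ᵥ v + ν ⬝ᵥ v' := by
    rw [← dotProduct_add, inf_add_sup, dotProduct_add]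
  linarith

end TransportValue

section Indicator

variable {m : ℕ}

theorem indVec_nonneg (P : Finset (Fin m)) : 0 ≤ indVec P := fun i ↦ by
  unfold indVec
  positivity

theorem indVec_union (A B : Finset (Fin m)) : indVec (A ∪ B) = indVec A ⊔ indVec B := by
  ext i
  by_cases hA : i ∈ A <;> by_cases hB : i ∈ B <;> simp [indVec, hA, hB]

theorem indVec_inter (A B : Finset (Fin m)) : indVec (A ∩ B) = indVec A ⊓ indVec B := by
  ext i
  by_cases hA : i ∈ A <;> by_cases hB : i ∈ B <;> simp [indVec, hA, hB]

theorem sum_indVec (P : Finset (Fin m)) : ∑ i, indVec P i = #P := by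
  simp [indVec]

theorem fval_eq_transportValue {n : ℕ} (k : ℕ) (S : Fin m → Fin n → ℝ) (P : Finset (Fin m)) :
    fval k S P = transportValue S (indVec P) fun _ ↦ (k : ℝ) / n :=
  rfl

end Indicator

/-- `f` is submodular on sets of cardinality at most `k`. -/
theorem stmt_8 (m n k : ℕ) (hm : 0 < m) (hn : 0 < n) (hk : 0 < k)
    (hkm : k ≤ m) (hkn : k ≤ n)
    (S : Fin m → Fin n → ℝ) (hS : ∀ i j, 0 ≤ S i j)
    (A B : Finset (Fin m)) (hcard : (A ∪ B).card ≤ k) :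
    fval k S (A ∪ B) + fval k S (A ∩ B) ≤ fval k S A + fval k S B := by
  have : NeZero n := .of_pos hn
  have hmass : ∑ i, (indVec A ⊔ indVec B) i ≤ ∑ _j : Fin n, (k : ℝ) / n := by
    rw [← indVec_union, sum_indVec, Fin.sum_const, nsmul_eq_mul, mul_div_cancel₀ _ (NeZero.ne _)]
    exact_mod_cast hcard
  simp only [fval_eq_transportValue, indVec_union, indVec_inter]
  exact stmt_8_general S (indVec_nonneg A) (indVec_nonneg B) (fun _ ↦ by positivity) hmass
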